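/- arXiv:2604.01392 — 8 statements merged into one kernel-verified Lean document; each statement's English description precedes it below -/
import Mathlib

section
/- Let M be an n×n real symmetric matrix (n ≥ 1). Then M is positive definite if and only if all of its leading principal minors are positive, i.e., det(M_{(1:i,1:i)}) > 0 for every i ∈ {1,…,n}, where M_{(1:i,1:i)} denotes the submatrix of M formed by its first i rows and first i columns. -/
/-- Induction on the size for the hard direction. -/
theorem sylvester_aux (n : ℕ) : ∀ (M : Matrix (Fin n) (Fin n) ℝ), M.IsSymm →
    (∀ (i : ℕ), 1 ≤ i → ∀ (hin : i ≤ n),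
        0 < (M.submatrix (Fin.castLE hin) (Fin.castLE hin)).det) → M.PosDef := by
  induction n with
  | zero =>
    intro M hM _
    refine Matrix.PosDef.of_dotProduct_mulVec_pos ?_ ?_
    · ext i; exact i.elim0
    · intro x hx
      exact absurd (Subsingleton.elim x 0) hx
  | succ k ih =>
    intro M hM h
    have hdet : 0 < M.det := by
      have := h (k + 1) (by omega) le_rfl
      simpa using this
    have hA : (M.submatrix (Fin.castLE (Nat.le_succ k)) (Fin.castLE (Nat.le_succ k))).PosDef := by
      refine ih _ (hM.submatrix _) ?_
      intro i hi hin
      have := h i hi (hin.trans (Nat.le_succ k))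
      rw [Matrix.submatrix_submatrix]
      exact this
    let e : Fin k ⊕ Fin 1 ≃ Fin (k + 1) := finSumFinEquiv
    set N := M.submatrix e e with hN
    have hNs : N.IsSymm := hM.submatrix _
    have hNdet : N.det = M.det := Matrix.det_submatrix_equiv_self e M
    have hA' : N.toBlocks₁₁.PosDef := hA
    have hB : N.toBlocks₂₁ = N.toBlocks₁₂.conjTranspose := by
      ext i j
      exact hNs.apply _ _
    have hNb : N = Matrix.fromBlocks N.toBlocks₁₁ N.toBlocks₁₂ N.toBlocks₁₂.conjTranspose
        N.toBlocks₂₂ := by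
      rw [← hB, Matrix.fromBlocks_toBlocks]
    haveI : Invertible N.toBlocks₁₁ := hA'.isUnit.invertible
    have hpos : N.PosSemidef := by
      rw [hNb, Matrix.PosDef.fromBlocks₁₁ _ _ hA']
      have hd : 0 < N.det := hNdet ▸ hdet
      rw [hNb, Matrix.det_fromBlocks₁₁, Matrix.invOf_eq_nonsing_inv] at hd
      have hS := (mul_pos_iff_of_pos_left hA'.det_pos).1 hd
      rw [Matrix.det_fin_one] at hS
      generalize N.toBlocks₂₂ - N.toBlocks₁₂.conjTranspose * N.toBlocks₁₁⁻¹ * N.toBlocks₁₂ = S at hS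
      have hSd : S = Matrix.diagonal (fun _ => S 0 0) := by
        ext i j
        fin_cases i; fin_cases j; simp
      rw [hSd]
      exact Matrix.PosSemidef.diagonal (fun _ => hS.le)
    have hMp : M.PosSemidef := (Matrix.posSemidef_submatrix_equiv e).1 hpos
    exact hMp.posDef_iff_isUnit.2 ((Matrix.isUnit_iff_isUnit_det _).2 hdet.ne'.isUnit)

/-- **Sylvester's criterion.** A real symmetric `n × n` matrix (`n ≥ 1`) is positive
definite if and only if all of its leading principal minors are positive. -/
theorem sylvester_criterion (n : ℕ) (hn : 1 ≤ n)
    (M : Matrix (Fin n) (Fin n) ℝ) (hM : M.IsSymm) :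
    M.PosDef ↔
      ∀ (i : ℕ), 1 ≤ i → ∀ (hin : i ≤ n),
        0 < (M.submatrix (Fin.castLE hin) (Fin.castLE hin)).det := by
  constructor
  · intro h i _ hin
    exact (h.submatrix (Fin.castLE_injective hin)).det_pos
  · exact sylvester_aux n M hM
end

section
/- Let C : ℝ^d → ℝ be differentiable with L_i-Lipschitz gradient (L_i > 0), let δ > 0 and γ > 0, and let θ, θ' ∈ ℝ^d satisfy the robust-safe-gradient-flow constraint γδ·C(θ) + ⟨∇C(θ), θ' − θ⟩ + (1/(2δ))·‖θ' − θ‖² ≤ 0. Then C(θ') ≤ (1 − γδ)·C(θ) − (1/2)·(1/δ − L_i)·‖θ' − θ‖². -/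
open scoped RealInnerProductSpace

/-- One-step descent inequality for a constraint of the robust safe gradient flow:
if `C` is differentiable with `Lᵢ`-Lipschitz gradient and `(θ, θ')` satisfies the
RSGF constraint `γδ C(θ) + ⟨∇C(θ), θ' - θ⟩ + (1/(2δ))‖θ' - θ‖² ≤ 0`, then
`C(θ') ≤ (1 - γδ) C(θ) - (1/2)(1/δ - Lᵢ)‖θ' - θ‖²`. -/
theorem rsgf_constraint_descent (d : ℕ)
    (C : EuclideanSpace ℝ (Fin d) → ℝ) (Li : ℝ) (hLi : 0 < Li)
    (hdiff : Differentiable ℝ C)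
    (hlip : ∀ x y : EuclideanSpace ℝ (Fin d),
      ‖gradient C x - gradient C y‖ ≤ Li * ‖x - y‖)
    (δ γ : ℝ) (hδ : 0 < δ) (hγ : 0 < γ)
    (θ θ' : EuclideanSpace ℝ (Fin d))
    (hcon : γ * δ * C θ + ⟪gradient C θ, θ' - θ⟫ + (1 / (2 * δ)) * ‖θ' - θ‖ ^ 2 ≤ 0) :
    C θ' ≤ (1 - γ * δ) * C θ - (1 / 2) * (1 / δ - Li) * ‖θ' - θ‖ ^ 2 := by
  set v := θ' - θ with hv
  have hder : ∀ t : ℝ, HasDerivAt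
      (fun t : ℝ => C (θ + t • v) - t * ⟪gradient C θ, v⟫ - Li / 2 * ‖v‖ ^ 2 * t ^ 2)
      (⟪gradient C (θ + t • v), v⟫ - ⟪gradient C θ, v⟫ - Li * ‖v‖ ^ 2 * t) t := by
    intro t
    have h1 : HasDerivAt (fun t : ℝ => θ + t • v) v t := by
      simpa using ((hasDerivAt_id t).smul_const v).const_add θ
    have h2 : HasFDerivAt C _ (θ + t • v) :=
      (hdiff (θ + t • v)).hasGradientAt.hasFDerivAt
    have h3 : HasDerivAt (fun t : ℝ => C (θ + t • v)) ⟪gradient C (θ + t • v), v⟫ t := by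
      exact h2.comp_hasDerivAt t h1
    have h4 : HasDerivAt (fun t : ℝ => t * ⟪gradient C θ, v⟫) ⟪gradient C θ, v⟫ t := by
      simpa using (hasDerivAt_id t).mul_const ⟪gradient C θ, v⟫
    have h5 : HasDerivAt (fun t : ℝ => Li / 2 * ‖v‖ ^ 2 * t ^ 2) (Li * ‖v‖ ^ 2 * t) t := by
      refine ((hasDerivAt_pow 2 t).const_mul (Li / 2 * ‖v‖ ^ 2)).congr_deriv ?_
      norm_num
      ring
    exact (h3.sub h4).sub h5
  have hanti := antitoneOn_of_deriv_nonpos (convex_Icc (0 : ℝ) 1)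
    (fun t _ => (hder t).continuousAt.continuousWithinAt)
    (fun t _ => (hder t).differentiableAt.differentiableWithinAt) (by
      intro t ht
      rw [interior_Icc] at ht
      rw [(hder t).deriv, ← inner_sub_left]
      have h1 := real_inner_le_norm (gradient C (θ + t • v) - gradient C θ) v
      have h2 := hlip (θ + t • v) θ
      rw [add_sub_cancel_left, norm_smul, Real.norm_of_nonneg ht.1.le] at h2
      have h3 := mul_le_mul_of_nonneg_right h2 (norm_nonneg v)
      nlinarith)
  have h := hanti (Set.left_mem_Icc.2 zero_le_one) (Set.right_mem_Icc.2 zero_le_one) zero_le_one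
  have e : θ + v = θ' := by rw [hv]; abel
  simp only [one_smul, zero_smul, add_zero, e] at h
  have e2 : 1 / (2 * δ) = 1 / 2 * (1 / δ) := by field_simp
  rw [e2] at hcon
  linarith
end

section
/- Let C : ℝ^d → ℝ be differentiable with L_i-Lipschitz gradient (L_i > 0), let δ > 0 and γ > 0 with δ < 1/γ and δ < 1/L_i, and let θ, θ' ∈ ℝ^d satisfy the robust-safe-gradient-flow constraint γδ·C(θ) + ⟨∇C(θ), θ' − θ⟩ + (1/(2δ))·‖θ' − θ‖² ≤ 0. If C(θ) ≤ 0, then C(θ') ≤ 0. -/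
open scoped RealInnerProductSpace

/-- Single-step forward invariance of the robust safe gradient flow: if `C` is
differentiable with `Lᵢ`-Lipschitz gradient, `δ < 1/γ`, `δ < 1/Lᵢ`, the pair
`(θ, θ')` satisfies the RSGF constraint, and `C(θ) ≤ 0`, then `C(θ') ≤ 0`. -/
theorem rsgf_single_step_invariance (d : ℕ)
    (C : EuclideanSpace ℝ (Fin d) → ℝ) (Li : ℝ) (hLi : 0 < Li)
    (hdiff : Differentiable ℝ C)
    (hlip : ∀ x y : EuclideanSpace ℝ (Fin d),
      ‖gradient C x - gradient C y‖ ≤ Li * ‖x - y‖)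
    (δ γ : ℝ) (hδ : 0 < δ) (hγ : 0 < γ) (hδγ : δ < 1 / γ) (hδL : δ < 1 / Li)
    (θ θ' : EuclideanSpace ℝ (Fin d))
    (hcon : γ * δ * C θ + ⟪gradient C θ, θ' - θ⟫ + (1 / (2 * δ)) * ‖θ' - θ‖ ^ 2 ≤ 0)
    (h0 : C θ ≤ 0) :
    C θ' ≤ 0 := by
  set v := θ' - θ with hv
  have hf : ∀ t : ℝ, HasDerivAt (fun t : ℝ => C (θ + t • v)) ⟪gradient C (θ + t • v), v⟫ t := by
    intro t
    have h1 : HasDerivAt (fun t : ℝ => θ + t • v) v t := by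
      simpa using ((hasDerivAt_id t).smul_const v).const_add θ
    have h2 := (hdiff (θ + t • v)).hasGradientAt.hasFDerivAt
    have h3 := h2.comp_hasDerivAt t h1
    rw [InnerProductSpace.toDual_apply_apply] at h3
    exact h3
  have hB : ∀ t : ℝ, HasDerivAt
      (fun t : ℝ => C θ + t * ⟪gradient C θ, v⟫ + t ^ 2 * (Li / 2 * ‖v‖ ^ 2))
      (⟪gradient C θ, v⟫ + 2 * t * (Li / 2 * ‖v‖ ^ 2)) t := by
    intro t
    have h1 := (((hasDerivAt_id t).mul_const ⟪gradient C θ, v⟫).const_add (C θ)).add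
      ((hasDerivAt_pow 2 t).mul_const (Li / 2 * ‖v‖ ^ 2))
    refine (h1.congr_deriv ?_)
    simp
  have key := image_le_of_deriv_right_le_deriv_boundary (a := 0) (b := 1)
    (fun t _ => (hf t).continuousAt.continuousWithinAt)
    (fun t _ => (hf t).hasDerivWithinAt)
    (by simp)
    (fun t _ => (hB t).continuousAt.continuousWithinAt)
    (fun t _ => (hB t).hasDerivWithinAt)
    (by
      intro t ht
      have h1 := hlip (θ + t • v) θ
      have h2 := real_inner_le_norm (gradient C (θ + t • v) - gradient C θ) v
      rw [inner_sub_left] at h2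
      rw [add_sub_cancel_left, norm_smul, Real.norm_of_nonneg ht.1] at h1
      have h3 := mul_le_mul_of_nonneg_right h1 (norm_nonneg v)
      nlinarith)
    (Set.right_mem_Icc.2 zero_le_one)
  have e : θ + v = θ' := by simp [hv]
  simp only [one_smul, e, one_mul, one_pow] at key
  have hg : γ * δ < 1 := by
    rw [lt_div_iff₀ hγ] at hδγ
    linarith
  have hL : Li / 2 ≤ 1 / (2 * δ) := by
    rw [lt_div_iff₀ hLi] at hδL
    rw [div_le_div_iff₀ (by norm_num) (by positivity)]
    linarith
  have h4 := mul_le_mul_of_nonneg_right hL (sq_nonneg ‖v‖)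
  nlinarith
end

section
/- Let q ∈ ℕ, q ≥ 1, and for each i ∈ {1,…,q} let C_i : ℝ^d → ℝ be differentiable with L_i-Lipschitz gradient (L_i > 0). Let δ > 0 and γ > 0 satisfy δ < 1/γ and δ < 1/L_i for all i. Let (θ_k)_{k∈ℕ} be a sequence in ℝ^d such that for every k and every i ∈ {1,…,q}, γδ·C_i(θ_k) + ⟨∇C_i(θ_k), θ_{k+1} − θ_k⟩ + (1/(2δ))·‖θ_{k+1} − θ_k‖² ≤ 0. If C_i(θ_0) ≤ 0 for all i ∈ {1,…,q}, then C_i(θ_k) ≤ 0 for all i ∈ {1,…,q} and all k ∈ ℕ. -/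
open scoped RealInnerProductSpace

/-- Descent lemma for functions with Lipschitz gradient. -/
theorem descent_lemma_aux {E : Type*} [NormedAddCommGroup E] [InnerProductSpace ℝ E]
    [CompleteSpace E] (f : E → ℝ) (L : ℝ) (hf : Differentiable ℝ f)
    (hlip : ∀ x y : E, ‖gradient f x - gradient f y‖ ≤ L * ‖x - y‖) (x v : E) :
    f (x + v) ≤ f x + ⟪gradient f x, v⟫ + L / 2 * ‖v‖ ^ 2 := by
  have hd : ∀ t : ℝ, HasDerivAt (fun t : ℝ => f (x + t • v))
      ⟪gradient f (x + t • v), v⟫ t := by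
    intro t
    have h1 : HasDerivAt (fun t : ℝ => x + t • v) v t := by
      simpa using ((hasDerivAt_id t).smul_const v).const_add x
    have h2 := (hf (x + t • v)).hasGradientAt.hasFDerivAt.comp_hasDerivAt t h1
    exact h2.congr_deriv (by simp)
  have hB : ∀ t : ℝ, HasDerivAt
      (fun t : ℝ => f x + t * ⟪gradient f x, v⟫ + L / 2 * ‖v‖ ^ 2 * t ^ 2)
      (⟪gradient f x, v⟫ + L * ‖v‖ ^ 2 * t) t := by
    intro t
    have h := (((hasDerivAt_id t).mul_const ⟪gradient f x, v⟫).const_add (f x)).add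
      ((hasDerivAt_pow 2 t).const_mul (L / 2 * ‖v‖ ^ 2))
    refine h.congr_deriv ?_
    simp
    ring
  have key := image_le_of_deriv_right_le_deriv_boundary (a := 0) (b := 1)
    (fun t _ => (hd t).continuousAt.continuousWithinAt)
    (fun t _ => (hd t).hasDerivWithinAt) (by simp)
    (fun t _ => (hB t).continuousAt.continuousWithinAt)
    (fun t _ => (hB t).hasDerivWithinAt)
    (by
      intro t ht
      have h1 : ⟪gradient f (x + t • v) - gradient f x, v⟫ ≤ L * ‖v‖ ^ 2 * t := by
        refine (real_inner_le_norm _ _).trans ?_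
        have h2 := hlip (x + t • v) x
        rw [add_sub_cancel_left, norm_smul, Real.norm_of_nonneg ht.1] at h2
        have h3 := mul_le_mul_of_nonneg_right h2 (norm_nonneg v)
        linarith
      rw [inner_sub_left] at h1
      linarith)
    (Set.right_mem_Icc.mpr zero_le_one)
  simpa using key

/-- Constraint satisfaction along the robust safe gradient flow iterates
(item (i) of the paper's Proposition): if all constraints `C i` are differentiable
with `L i`-Lipschitz gradients, `δ < 1/γ` and `δ < 1/(L i)` for all `i`, every step
of the sequence satisfies the RSGF constraints, and the initial point is feasible,
then all iterates are feasible. -/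
theorem rsgf_iterates_feasible (d q : ℕ) (hq : 1 ≤ q)
    (C : Fin q → EuclideanSpace ℝ (Fin d) → ℝ)
    (L : Fin q → ℝ) (hL : ∀ i, 0 < L i)
    (hdiff : ∀ i, Differentiable ℝ (C i))
    (hlip : ∀ i, ∀ x y : EuclideanSpace ℝ (Fin d),
      ‖gradient (C i) x - gradient (C i) y‖ ≤ L i * ‖x - y‖)
    (δ γ : ℝ) (hδ : 0 < δ) (hγ : 0 < γ)
    (hδγ : δ < 1 / γ) (hδL : ∀ i, δ < 1 / L i)
    (θ : ℕ → EuclideanSpace ℝ (Fin d))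
    (hcon : ∀ (k : ℕ) (i : Fin q),
      γ * δ * C i (θ k) + ⟪gradient (C i) (θ k), θ (k + 1) - θ k⟫ +
        (1 / (2 * δ)) * ‖θ (k + 1) - θ k‖ ^ 2 ≤ 0)
    (h0 : ∀ i, C i (θ 0) ≤ 0) :
    ∀ (k : ℕ) (i : Fin q), C i (θ k) ≤ 0 := by
  intro k
  induction k with
  | zero => exact h0
  | succ k ih =>
    intro i
    have h1 := descent_lemma_aux (C i) (L i) (hdiff i) (hlip i) (θ k) (θ (k + 1) - θ k)
    rw [add_sub_cancel] at h1
    have h2 := hcon k i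
    have h3 : L i / 2 ≤ 1 / (2 * δ) := by
      have := (lt_div_iff₀ (hL i)).mp (hδL i)
      rw [div_le_div_iff₀ two_pos (by positivity)]
      linarith
    have h4 := mul_le_mul_of_nonneg_right h3 (sq_nonneg ‖θ (k + 1) - θ k‖)
    have h5 : δ * γ < 1 := (lt_div_iff₀ hγ).mp hδγ
    nlinarith [ih i]
end

section
/- Let f : ℝ^d → ℝ be differentiable with L-Lipschitz gradient (L > 0), let ε > 0, and let 0 < δ < 1/L. Let θ, θ' ∈ ℝ^d and g ∈ ℝ^d satisfy: (a) ‖g − ∇f(θ)‖ ≤ ε; (b) the variational inequality at y = θ, namely ⟨θ − θ', g + (1/δ)(θ' − θ)⟩ ≥ 0. If ‖θ' − θ‖ > 4ε/L, then f(θ') − f(θ) < −4ε²/L. -/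
open scoped RealInnerProductSpace

/-- Sufficient decrease of the objective under an inexact-gradient RSGF step:
if `f` is differentiable with `L`-Lipschitz gradient, `0 < δ < 1/L`, the inexact
gradient `g` satisfies `‖g - ∇f(θ)‖ ≤ ε`, the variational inequality
`⟨θ - θ', g + (1/δ)(θ' - θ)⟩ ≥ 0` holds, and `‖θ' - θ‖ > 4ε/L`, then
`f(θ') - f(θ) < -4ε²/L`. -/
theorem rsgf_inexact_sufficient_decrease (d : ℕ)
    (f : EuclideanSpace ℝ (Fin d) → ℝ) (L : ℝ) (hL : 0 < L)
    (hdiff : Differentiable ℝ f)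
    (hlip : ∀ x y : EuclideanSpace ℝ (Fin d),
      ‖gradient f x - gradient f y‖ ≤ L * ‖x - y‖)
    (ε : ℝ) (hε : 0 < ε) (δ : ℝ) (hδ0 : 0 < δ) (hδ : δ < 1 / L)
    (θ θ' g : EuclideanSpace ℝ (Fin d))
    (ha : ‖g - gradient f θ‖ ≤ ε)
    (hb : 0 ≤ ⟪θ - θ', g + (1 / δ) • (θ' - θ)⟫)
    (hfar : 4 * ε / L < ‖θ' - θ‖) :
    f θ' - f θ < -(4 * ε ^ 2 / L) := by
  obtain ⟨v, hv⟩ : ∃ v, v = θ' - θ := ⟨_, rfl⟩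
  have hθ' : θ' = θ + v := by rw [hv]; abel
  have hneg : θ - θ' = -v := by rw [hv]; abel
  rw [hneg, ← hv, inner_neg_left, inner_add_right, real_inner_smul_right,
    real_inner_self_eq_norm_sq] at hb
  rw [← hv] at hfar
  -- descent inequality
  have hderiv : ∀ t : ℝ, HasDerivAt (fun t : ℝ => f (θ + t • v))
      (⟪gradient f (θ + t • v), v⟫) t := by
    intro t
    have h1 : HasDerivAt (fun t : ℝ => θ + t • v) v t := by
      simpa using ((hasDerivAt_id t).smul_const v).const_add θ
    have h2 := (hdiff (θ + t • v)).hasGradientAt.hasFDerivAt.comp_hasDerivAt t h1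
    refine HasDerivAt.congr_deriv h2 ?_
    simp
  have hBd : ∀ t : ℝ, HasDerivAt
      (fun t : ℝ => f θ + t * ⟪gradient f θ, v⟫ + L / 2 * ‖v‖ ^ 2 * t ^ 2)
      (⟪gradient f θ, v⟫ + L * ‖v‖ ^ 2 * t) t := by
    intro t
    have h := (((hasDerivAt_id t).mul_const (⟪gradient f θ, v⟫)).const_add (f θ)).add
      ((hasDerivAt_pow 2 t).const_mul (L / 2 * ‖v‖ ^ 2))
    refine HasDerivAt.congr_deriv h ?_
    simp
    ring
  have hdesc : f θ' ≤ f θ + ⟪gradient f θ, v⟫ + L / 2 * ‖v‖ ^ 2 := by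
    have := image_le_of_deriv_right_le_deriv_boundary (a := 0) (b := 1)
      (fun t _ => (hderiv t).continuousAt.continuousWithinAt)
      (fun t _ => (hderiv t).hasDerivWithinAt) (by simp)
      (fun t _ => (hBd t).continuousAt.continuousWithinAt)
      (fun t _ => (hBd t).hasDerivWithinAt)
      (by
        intro t ht
        have h1 := hlip (θ + t • v) θ
        have h2 := real_inner_le_norm (gradient f (θ + t • v) - gradient f θ) v
        rw [inner_sub_left] at h2
        rw [add_sub_cancel_left, norm_smul, Real.norm_eq_abs, abs_of_nonneg ht.1] at h1
        have h3 := mul_le_mul_of_nonneg_right h1 (norm_nonneg v)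
        nlinarith) (Set.right_mem_Icc.2 zero_le_one)
    simpa [hθ'] using this
  have hin : ⟪gradient f θ, v⟫ ≤ ⟪v, g⟫ + ε * ‖v‖ := by
    have h2 := real_inner_le_norm (gradient f θ - g) v
    rw [inner_sub_left, norm_sub_rev, real_inner_comm v g] at h2
    have h3 := mul_le_mul_of_nonneg_right ha (norm_nonneg v)
    linarith
  have hδ' : L < 1 / δ := by
    rw [lt_div_iff₀ hδ0]
    rw [lt_div_iff₀ hL] at hδ
    linarith
  have hn : 4 * ε < ‖v‖ * L := (div_lt_iff₀ hL).1 hfar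
  have hsq := mul_le_mul_of_nonneg_right hδ'.le (sq_nonneg ‖v‖)
  have hfin : f θ' - f θ ≤ ε * ‖v‖ - L / 2 * ‖v‖ ^ 2 := by linarith
  refine lt_of_le_of_lt hfin ?_
  rw [← neg_div, lt_div_iff₀ hL]
  nlinarith [mul_pos (sub_pos.2 hn) (sub_pos.2 hn), mul_pos hε (sub_pos.2 hn)]
end

section
/- Let f : ℝ^d → ℝ be differentiable with L-Lipschitz gradient (L > 0), bounded below by f_min ∈ ℝ, and let ε > 0, 0 < δ < 1/L. Let (θ_k)_{k∈ℕ} be a sequence in ℝ^d and (g_k)_{k∈ℕ} a sequence in ℝ^d such that for every k: (a) ‖g_k − ∇f(θ_k)‖ ≤ ε, and (b) ⟨θ_k − θ_{k+1}, g_k + (1/δ)(θ_{k+1} − θ_k)⟩ ≥ 0. Then for every natural number K* with K* ≥ L·(f(θ_0) − f_min)/(4ε²), there exists k ∈ {0, 1, …, K*} such that ‖θ_{k+1} − θ_k‖ ≤ 4ε/L. -/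
open scoped RealInnerProductSpace

theorem descent_aux {d : ℕ}
    (f : EuclideanSpace ℝ (Fin d) → ℝ) (L : ℝ)
    (hdiff : Differentiable ℝ f)
    (hlip : ∀ x y : EuclideanSpace ℝ (Fin d),
      ‖gradient f x - gradient f y‖ ≤ L * ‖x - y‖)
    (x s : EuclideanSpace ℝ (Fin d)) :
    f (x + s) ≤ f x + ⟪gradient f x, s⟫ + L / 2 * ‖s‖ ^ 2 := by
  have hder : ∀ t : ℝ, HasDerivAt
      (fun t : ℝ => f (x + t • s) - t * ⟪gradient f x, s⟫ - t ^ 2 * (L / 2 * ‖s‖ ^ 2))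
      (⟪gradient f (x + t • s), s⟫ - ⟪gradient f x, s⟫ - 2 * t * (L / 2 * ‖s‖ ^ 2)) t := by
    intro t
    have h1 : HasDerivAt (fun t : ℝ => x + t • s) s t := by
      simpa using ((hasDerivAt_id t).smul_const s).const_add x
    have h2 := (hdiff (x + t • s)).hasGradientAt.hasFDerivAt.comp_hasDerivAt t h1
    have h2' : HasDerivAt (fun t : ℝ => f (x + t • s)) ⟪gradient f (x + t • s), s⟫ t := by
      exact h2
    have h3 := (hasDerivAt_id t).mul_const ⟪gradient f x, s⟫
    have h4 := (hasDerivAt_pow 2 t).mul_const (L / 2 * ‖s‖ ^ 2)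
    have h5 := (h2'.sub h3).sub h4
    have h6 : ⟪gradient f (x + t • s), s⟫ - ⟪gradient f x, s⟫ - 2 * t * (L / 2 * ‖s‖ ^ 2)
        = ⟪gradient f (x + t • s), s⟫ - 1 * ⟪gradient f x, s⟫
          - ((2 : ℕ) : ℝ) * t ^ (2 - 1) * (L / 2 * ‖s‖ ^ 2) := by
      norm_num
    rw [h6]
    exact h5
  have hanti := antitoneOn_of_deriv_nonpos (convex_Icc (0 : ℝ) 1)
    (fun t _ => (hder t).continuousAt.continuousWithinAt)
    (fun t _ => (hder t).differentiableAt.differentiableWithinAt)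
    (by
      intro t ht
      rw [interior_Icc] at ht
      rw [(hder t).deriv, ← inner_sub_left]
      have h1 := real_inner_le_norm (gradient f (x + t • s) - gradient f x) s
      have h2 := hlip (x + t • s) x
      rw [add_sub_cancel_left, norm_smul, Real.norm_of_nonneg ht.1.le] at h2
      have h3 := mul_le_mul_of_nonneg_right h2 (norm_nonneg s)
      nlinarith)
  have h := hanti (Set.left_mem_Icc.2 zero_le_one) (Set.right_mem_Icc.2 zero_le_one) zero_le_one
  simp only [one_smul, zero_smul, add_zero, one_mul, zero_mul, one_pow] at h
  norm_num at h ⊢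
  linarith

/-- Approximate-fixed-point property of the inexact robust safe gradient flow
(item (ii) of the paper's Proposition): if `f` is `L`-smooth and bounded below by
`fmin`, `0 < δ < 1/L`, the gradient estimates satisfy `‖g k - ∇f(θ k)‖ ≤ ε`, and
each step satisfies the variational inequality tested at `y = θ k`, then for every
`K* ≥ L (f(θ 0) - fmin) / (4ε²)` there exists `k ≤ K*` with
`‖θ (k+1) - θ k‖ ≤ 4ε/L`. -/
theorem rsgf_inexact_approx_fixed_point (d : ℕ)
    (f : EuclideanSpace ℝ (Fin d) → ℝ) (L : ℝ) (hL : 0 < L)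
    (hdiff : Differentiable ℝ f)
    (hlip : ∀ x y : EuclideanSpace ℝ (Fin d),
      ‖gradient f x - gradient f y‖ ≤ L * ‖x - y‖)
    (fmin : ℝ) (hbdd : ∀ x, fmin ≤ f x)
    (ε : ℝ) (hε : 0 < ε) (δ : ℝ) (hδ0 : 0 < δ) (hδ : δ < 1 / L)
    (θ g : ℕ → EuclideanSpace ℝ (Fin d))
    (ha : ∀ k, ‖g k - gradient f (θ k)‖ ≤ ε)
    (hb : ∀ k, 0 ≤ ⟪θ k - θ (k + 1), g k + (1 / δ) • (θ (k + 1) - θ k)⟫)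
    (Kstar : ℕ) (hK : L * (f (θ 0) - fmin) / (4 * ε ^ 2) ≤ (Kstar : ℝ)) :
    ∃ k ≤ Kstar, ‖θ (k + 1) - θ k‖ ≤ 4 * ε / L := by
  by_contra! hcon
  have hstep : ∀ k ≤ Kstar, f (θ (k + 1)) ≤ f (θ k) - 4 * ε ^ 2 / L := by
    intro k hk
    have hs := hcon k hk
    have hd := descent_aux f L hdiff hlip (θ k) (θ (k + 1) - θ k)
    rw [add_sub_cancel] at hd
    have h1 := hb k
    rw [← neg_sub (θ (k + 1)) (θ k), inner_neg_left, inner_add_right, real_inner_smul_right,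
      real_inner_self_eq_norm_sq, real_inner_comm] at h1
    have h2 := real_inner_le_norm (gradient f (θ k) - g k) (θ (k + 1) - θ k)
    rw [inner_sub_left, norm_sub_rev] at h2
    have h3 := mul_le_mul_of_nonneg_right (ha k) (norm_nonneg (θ (k + 1) - θ k))
    have hLd : L ≤ 1 / δ := by
      rw [lt_div_iff₀ hL] at hδ
      rw [le_div_iff₀ hδ0]
      linarith
    have h4 := mul_le_mul_of_nonneg_right hLd (sq_nonneg ‖θ (k + 1) - θ k‖)
    generalize ‖θ (k + 1) - θ k‖ = r at *
    have h5 : f (θ (k + 1)) ≤ f (θ k) + ε * r - L / 2 * r ^ 2 := by linarith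
    have h6 : 4 * ε ≤ L * r := by
      rw [div_lt_iff₀ hL] at hs
      linarith
    have h7 : 4 * ε ^ 2 / L ≤ ε * r := by
      rw [div_le_iff₀ hL]
      nlinarith
    have hr : 0 ≤ r := le_trans (by positivity) hs.le
    nlinarith
  have hsum : ∀ n ≤ Kstar + 1, f (θ n) ≤ f (θ 0) - n * (4 * ε ^ 2 / L) := by
    intro n
    induction n with
    | zero => intro _; simp
    | succ m ih =>
      intro hm
      have h1 := ih (by omega)
      have h2 := hstep m (by omega)
      push_cast
      linarith
  have h1 := hsum (Kstar + 1) le_rfl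
  have h2 := hbdd (θ (Kstar + 1))
  have hp : 0 < 4 * ε ^ 2 / L := by positivity
  have h3 : f (θ 0) - fmin ≤ Kstar * (4 * ε ^ 2 / L) := by
    rw [div_le_iff₀ (by positivity)] at hK
    rw [← mul_div_assoc, le_div_iff₀ hL]
    linarith
  push_cast at h1
  linarith
end

section
/- Let C : ℝ^d → ℝ be differentiable with L_i-Lipschitz gradient (L_i > 0), let δ > 0 and γ > 0 with γδ < 1 and δ ≤ 1/L_i, and let θ, θ' ∈ ℝ^d satisfy γδ·C(θ) + ⟨∇C(θ), θ' − θ⟩ + (1/(2δ))·‖θ' − θ‖² ≤ 0. If C(θ) > 0, then C(θ') < C(θ). -/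
open scoped RealInnerProductSpace

/-- Strict decrease of an infeasible constraint along a robust safe gradient flow
step: if `C` is differentiable with `Lᵢ`-Lipschitz gradient, `γδ < 1`, `δ ≤ 1/Lᵢ`,
the pair `(θ, θ')` satisfies the RSGF constraint, and `C(θ) > 0`, then
`C(θ') < C(θ)`. -/
theorem rsgf_infeasible_strict_decrease (d : ℕ)
    (C : EuclideanSpace ℝ (Fin d) → ℝ) (Li : ℝ) (hLi : 0 < Li)
    (hdiff : Differentiable ℝ C)
    (hlip : ∀ x y : EuclideanSpace ℝ (Fin d),
      ‖gradient C x - gradient C y‖ ≤ Li * ‖x - y‖)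
    (δ γ : ℝ) (hδ : 0 < δ) (hγ : 0 < γ) (hγδ : γ * δ < 1) (hδL : δ ≤ 1 / Li)
    (θ θ' : EuclideanSpace ℝ (Fin d))
    (hcon : γ * δ * C θ + ⟪gradient C θ, θ' - θ⟫ + (1 / (2 * δ)) * ‖θ' - θ‖ ^ 2 ≤ 0)
    (hpos : 0 < C θ) :
    C θ' < C θ := by
  set v := θ' - θ with hv
  have hg : ∀ t : ℝ, HasDerivAt
      (fun t : ℝ => C (θ + t • v) - t * ⟪gradient C θ, v⟫ - Li / 2 * ‖v‖ ^ 2 * t ^ 2)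
      (⟪gradient C (θ + t • v), v⟫ - ⟪gradient C θ, v⟫ - Li / 2 * ‖v‖ ^ 2 * (2 * t)) t := by
    intro t
    have h1 : HasDerivAt (fun t : ℝ => θ + t • v) v t := by
      simpa using ((hasDerivAt_id t).smul_const v).const_add θ
    have h2 := (hdiff (θ + t • v)).hasGradientAt.hasFDerivAt.comp_hasDerivAt t h1
    have h3 : HasDerivAt (fun t : ℝ => C (θ + t • v)) ⟪gradient C (θ + t • v), v⟫ t := by
      exact h2
    have h4 := (hasDerivAt_id t).mul_const ⟪gradient C θ, v⟫
    have h5 := (hasDerivAt_pow 2 t).const_mul (Li / 2 * ‖v‖ ^ 2)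
    refine ((h3.sub h4).sub h5).congr_deriv ?_
    norm_num
  have hanti : AntitoneOn
      (fun t : ℝ => C (θ + t • v) - t * ⟪gradient C θ, v⟫ - Li / 2 * ‖v‖ ^ 2 * t ^ 2)
      (Set.Icc 0 1) := by
    apply antitoneOn_of_deriv_nonpos (convex_Icc 0 1)
    · exact fun t _ => (hg t).continuousAt.continuousWithinAt
    · exact fun t _ => (hg t).differentiableAt.differentiableWithinAt
    · intro t ht
      rw [interior_Icc] at ht
      rw [(hg t).deriv, ← inner_sub_left]
      have h1 := real_inner_le_norm (gradient C (θ + t • v) - gradient C θ) v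
      have h2 := hlip (θ + t • v) θ
      rw [add_sub_cancel_left, norm_smul, Real.norm_of_nonneg ht.1.le] at h2
      have h3 := mul_le_mul_of_nonneg_right h2 (norm_nonneg v)
      nlinarith
  have h := hanti (Set.left_mem_Icc.2 zero_le_one) (Set.right_mem_Icc.2 zero_le_one) zero_le_one
  have hθ : θ + v = θ' := by simp [hv]
  simp only [one_smul, zero_smul, add_zero, hθ] at h
  have hL : Li / 2 ≤ 1 / (2 * δ) := by
    rw [le_div_iff₀ hLi] at hδL
    rw [le_div_iff₀ (by positivity)]
    linarith
  have h6 := mul_le_mul_of_nonneg_right hL (sq_nonneg ‖v‖)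
  have h7 : 0 < γ * δ * C θ := by positivity
  nlinarith
end

section
/- Let C : ℝ^d → ℝ be differentiable with L_i-Lipschitz gradient (L_i > 0), let δ > 0 and γ > 0 with γδ < 1 and δ ≤ 1/L_i, and let (θ_k)_{k∈ℕ} be a sequence in ℝ^d such that for every k, γδ·C(θ_k) + ⟨∇C(θ_k), θ_{k+1} − θ_k⟩ + (1/(2δ))·‖θ_{k+1} − θ_k‖² ≤ 0. Then C(θ_k) ≤ (1 − γδ)^k · C(θ_0) for all k ∈ ℕ; in particular, for every ε' > 0 there exists N ∈ ℕ such that C(θ_k) ≤ ε' for all k ≥ N, i.e., the sequence (θ_k) converges to the feasible set {θ : C(θ) ≤ 0}. -/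
open scoped RealInnerProductSpace

theorem rsgf_descent {d : ℕ}
    (C : EuclideanSpace ℝ (Fin d) → ℝ) (L : ℝ)
    (hdiff : Differentiable ℝ C)
    (hlip : ∀ x y : EuclideanSpace ℝ (Fin d),
      ‖gradient C x - gradient C y‖ ≤ L * ‖x - y‖)
    (x v : EuclideanSpace ℝ (Fin d)) :
    C (x + v) ≤ C x + ⟪gradient C x, v⟫ + L / 2 * ‖v‖ ^ 2 := by
  have hf : ∀ t : ℝ, HasDerivAt (fun t : ℝ => C (x + t • v)) ⟪gradient C (x + t • v), v⟫ t := by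
    intro t
    have h1 : HasDerivAt (fun t : ℝ => x + t • v) v t := by
      simpa using ((hasDerivAt_id t).smul_const v).const_add x
    have h2 := (hdiff (x + t • v)).hasGradientAt.hasFDerivAt
    have h3 := h2.comp_hasDerivAt t h1
    simpa [Function.comp_def] using h3
  have hB : ∀ t : ℝ, HasDerivAt
      (fun t : ℝ => C x + t * ⟪gradient C x, v⟫ + L / 2 * ‖v‖ ^ 2 * t ^ 2)
      (⟪gradient C x, v⟫ + L * ‖v‖ ^ 2 * t) t := by
    intro t
    have h := (((hasDerivAt_id t).mul_const ⟪gradient C x, v⟫).const_add (C x)).add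
      (((hasDerivAt_id t).pow 2).const_mul (L / 2 * ‖v‖ ^ 2))
    refine h.congr_deriv ?_
    simp
    ring
  have key := image_le_of_deriv_right_le_deriv_boundary (a := 0) (b := 1)
    (fun t _ => (hf t).continuousAt.continuousWithinAt)
    (fun t _ => (hf t).hasDerivWithinAt) (by simp)
    (fun t _ => (hB t).continuousAt.continuousWithinAt)
    (fun t _ => (hB t).hasDerivWithinAt) (fun t ht => by
      have h1 : ⟪gradient C (x + t • v) - gradient C x, v⟫ ≤ L * ‖v‖ ^ 2 * t := by
        refine (real_inner_le_norm _ _).trans ?_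
        have h2 := hlip (x + t • v) x
        rw [add_sub_cancel_left, norm_smul, Real.norm_of_nonneg ht.1] at h2
        calc _ ≤ (L * (t * ‖v‖)) * ‖v‖ := by gcongr
          _ = _ := by ring
      rw [inner_sub_left] at h1
      linarith) (Set.right_mem_Icc.2 zero_le_one)
  simpa using key

/-- Geometric decay of constraint values along the robust safe gradient flow and
convergence to the feasible set: if `C` is differentiable with `Lᵢ`-Lipschitz
gradient, `γδ < 1`, `δ ≤ 1/Lᵢ`, and every step of the sequence satisfies the RSGF
constraint, then `C(θ k) ≤ (1 - γδ)^k C(θ 0)` for all `k`, and for every `ε' > 0`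
there is `N` such that `C(θ k) ≤ ε'` for all `k ≥ N`. -/
theorem rsgf_geometric_decay_to_feasible (d : ℕ)
    (C : EuclideanSpace ℝ (Fin d) → ℝ) (Li : ℝ) (hLi : 0 < Li)
    (hdiff : Differentiable ℝ C)
    (hlip : ∀ x y : EuclideanSpace ℝ (Fin d),
      ‖gradient C x - gradient C y‖ ≤ Li * ‖x - y‖)
    (δ γ : ℝ) (hδ : 0 < δ) (hγ : 0 < γ) (hγδ : γ * δ < 1) (hδL : δ ≤ 1 / Li)
    (θ : ℕ → EuclideanSpace ℝ (Fin d))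
    (hcon : ∀ k : ℕ,
      γ * δ * C (θ k) + ⟪gradient C (θ k), θ (k + 1) - θ k⟫ +
        (1 / (2 * δ)) * ‖θ (k + 1) - θ k‖ ^ 2 ≤ 0) :
    (∀ k : ℕ, C (θ k) ≤ (1 - γ * δ) ^ k * C (θ 0)) ∧
      ∀ ε' > (0 : ℝ), ∃ N : ℕ, ∀ k ≥ N, C (θ k) ≤ ε' := by
  have hstep : ∀ k, C (θ (k + 1)) ≤ (1 - γ * δ) * C (θ k) := by
    intro k
    have h1 := rsgf_descent C Li hdiff hlip (θ k) (θ (k + 1) - θ k)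
    rw [add_sub_cancel] at h1
    have h2 : Li / 2 ≤ 1 / (2 * δ) := by
      rw [le_div_iff₀ hLi] at hδL
      rw [le_div_iff₀ (by positivity)]
      linarith
    have h3 := mul_le_mul_of_nonneg_right h2 (sq_nonneg ‖θ (k + 1) - θ k‖)
    linarith [hcon k]
  have hq : 0 ≤ 1 - γ * δ := by linarith
  have hgeo : ∀ k : ℕ, C (θ k) ≤ (1 - γ * δ) ^ k * C (θ 0) := by
    intro k
    induction k with
    | zero => simp
    | succ k ih =>
      calc _ ≤ _ := hstep k
        _ ≤ (1 - γ * δ) * ((1 - γ * δ) ^ k * C (θ 0)) := mul_le_mul_of_nonneg_left ih hq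
        _ = _ := by ring
  refine ⟨hgeo, fun ε hε => ?_⟩
  have hlim := (tendsto_pow_atTop_nhds_zero_of_lt_one hq
    (by linarith [mul_pos hγ hδ])).mul_const (C (θ 0))
  rw [zero_mul] at hlim
  obtain ⟨N, hN⟩ := Filter.eventually_atTop.1 (hlim.eventually (gt_mem_nhds hε))
  exact ⟨N, fun k hk => (hgeo k).trans (hN k hk).le⟩
end
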